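/- Let V₁, V₂: ℝ → [0,∞) be Orlicz functions satisfying V₁(x)/V₂(x) → ∞ as |x| → ∞ and ∫_ℝ V₁(x) e^{αV₂(x)} dx < ∞ for all α ∈ (-∞,0). Then there exists R̄ ∈ (0,∞) such that for all 0 < R ≤ R̄ and every fixed k ∈ ℕ: lim_{ε→0} lim_{n→∞} d_w( λ^{(n,k)}_{1,V₁ | R+ε,V₂}, λ^{(n,k)}_{R,V₂} ) = 0, where λ^{(n,k)}_{1,V₁ | R+ε,V₂} is the law of the first k coordinates of a uniform random point X₁^{n,V₁} on B_1^{n,V₁} conditioned on X₁^{n,V₁} ∈ B_{R+ε}^{n,V₂}, λ^{(n,k)}_{R,V₂} is the law of the first k coordinates of a uniform random point on B_R^{n,V₂}, and d_w is a metric inducing weak convergence of probability measures on ℝ^k (e.g., the Lévy–Prokhorov metric). -/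

import Mathlib

/-!
Let `γ` be the probability measure with density proportional to `exp (α V₂)`, where `α < 0` is
chosen so that `V₂` has mean `R` under `γ`. On sets where `∑ V₂(x_k) ≤ R n`, Lebesgue measure is at
most `Cⁿ γ^{⊗n}`, where `C` is the Chernoff bound for `V₂` at `α`. By Jensen's inequality this `α`
optimises the Chernoff bound, and the bound is attained up to a factor `e^{-o(n)}`: by the law of
large numbers, the product of a Gibbs measure of slightly lower energy charges the ball. As the
temperature tends to `0` the Gibbs measures concentrate at the minimum of `V₂` (Laplace's method),
where `V₁` vanishes, so for small `R` all of them give `V₁` mean less than `1` and the constraint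
`∑ V₁(x_k) ≤ n` costs nothing.

Hence both laws of the theorem have density at most `e^{cn}` with respect to `γ^{⊗n}`, with `c`
arbitrarily small. They are also exchangeable, so the first `k` coordinates can be read off from
the empirical measure of about `n / (k + 1)` disjoint blocks of `k` coordinates. By Hoeffding's
inequality that empirical measure is close to `γ^{⊗k}` outside an event of `γ^{⊗n}`-probability
exponentially small at a fixed rate, which survives the factor `e^{cn}`. So both laws are close to
`γ^{⊗k}`.
-/

open MeasureTheory Real Filter Topology ENNReal Classical

noncomputable section

/-- An Orlicz function: convex, symmetric, vanishing only at `0`, nonnegative. -/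
def IsOrlicz (V : ℝ → ℝ) : Prop :=
  ConvexOn ℝ Set.univ V ∧ (∀ x, V (-x) = V x) ∧ V 0 = 0 ∧ (∀ x, x ≠ 0 → 0 < V x) ∧
    (∀ x, 0 ≤ V x)

/-- The Orlicz ball `B_R^{n,V} = {x ∈ ℝⁿ : ∑ V(x_k) ≤ R n}`. -/
def OrliczBall (V : ℝ → ℝ) (R : ℝ) (n : ℕ) : Set (Fin n → ℝ) :=
  {x | ∑ i, V (x i) ≤ R * n}

/-- The uniform distribution on the Orlicz ball (normalized Lebesgue measure). -/
def unifBall (V : ℝ → ℝ) (R : ℝ) (n : ℕ) : Measure (Fin n → ℝ) :=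
  (volume (OrliczBall V R n))⁻¹ • volume.restrict (OrliczBall V R n)

/-- Projection onto the first `k` coordinates. -/
def proj (k n : ℕ) (x : Fin n → ℝ) : Fin k → ℝ :=
  fun i => if h : (i : ℕ) < n then x ⟨i, h⟩ else 0

open ProbabilityTheory

section Product

variable {ι : Type*} [Fintype ι] {X : ι → Type*} [∀ i, MeasurableSpace (X i)]

theorem pi_tilted (μ : ∀ i, Measure (X i)) [∀ i, SigmaFinite (μ i)] (f : ∀ i, X i → ℝ) :
    Measure.pi (fun i => (μ i).tilted (f i)) =
      (Measure.pi μ).tilted fun x => ∑ i, f i (x i) := by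
  refine Measure.pi_eq fun s hs => ?_
  rw [tilted_apply_eq_ofReal_integral' _ (MeasurableSet.univ_pi hs)]
  simp_rw [fun i => tilted_apply_eq_ofReal_integral' (μ := μ i) (f i) (hs i)]
  rw [← ENNReal.ofReal_prod_of_nonneg fun i _ => by positivity, Measure.restrict_pi_pi]
  simp_rw [exp_sum, integral_fintype_prod_eq_prod fun i x => exp (f i x),
    ← Finset.prod_div_distrib]
  rw [integral_fintype_prod_eq_prod fun i x => exp (f i x) / ∫ y, exp (f i y) ∂μ i]

end Product

section Gibbs

variable {X : Type*} [MeasurableSpace X]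

/-- The Gibbs measure with energy `V` and inverse temperature `-α`: the probability measure with
density proportional to `exp (α * V)` with respect to `μ` (and `0` if `exp (α * V)` is not
integrable). -/
def gibbs (μ : Measure X) (V : X → ℝ) (α : ℝ) : Measure X :=
  μ.tilted fun x => α * V x

/-- The Chernoff bound, for `α ≤ 0`, on the measure of the sublevel set `{V ≤ R}`. On a power
space, the bound for `∑ i, V (x i) ≤ R * n` is the `n`-th power of the bound for one coordinate. -/
def chernoffBound (μ : Measure X) (V : X → ℝ) (α R : ℝ) : ℝ :=
  mgf V μ α * exp (-(α * R))

variable {μ : Measure X} {V : X → ℝ} {α β R : ℝ} {S : Set X}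

theorem isProbabilityMeasure_gibbs [NeZero μ] (hexp : Integrable (fun x => exp (α * V x)) μ) :
    IsProbabilityMeasure (gibbs μ V α) :=
  isProbabilityMeasure_tilted hexp

theorem chernoffBound_nonneg : 0 ≤ chernoffBound μ V α R :=
  mul_nonneg mgf_nonneg (exp_pos _).le

theorem chernoffBound_pos [NeZero μ] (hexp : Integrable (fun x => exp (α * V x)) μ) :
    0 < chernoffBound μ V α R :=
  mul_pos (mgf_pos' (NeZero.ne μ) hexp) (exp_pos _)

theorem chernoffBound_add (s : ℝ) :
    chernoffBound μ V α (R + s) = chernoffBound μ V α R * exp (-(α * s)) := by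
  rw [chernoffBound, chernoffBound, mul_assoc, ← exp_add]
  ring_nf

theorem chernoffBound_le_chernoffBound (hα : α ≤ 0) {r : ℝ} (hr : r ≤ R) :
    chernoffBound μ V α r ≤ chernoffBound μ V α R := by
  have := mul_le_mul_of_nonpos_left hr hα
  have := mgf_nonneg (X := V) (μ := μ) (t := α)
  unfold chernoffBound
  gcongr

theorem measure_eq_setLIntegral_gibbs (hexp : Integrable (fun x => exp (α * V x)) μ)
    (hS : MeasurableSet S) :
    μ S = ∫⁻ x in S, ENNReal.ofReal (chernoffBound μ V α (V x)) ∂gibbs μ V α := by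
  rcases eq_or_ne μ 0 with rfl | hμ
  · simp [gibbs]
  rw [gibbs, setLIntegral_tilted' _ _ hS, ← setLIntegral_one]
  refine setLIntegral_congr_fun hS fun x _ => ?_
  have hpos : 0 < ∫ x, exp (α * V x) ∂μ := mgf_pos' hμ hexp
  simp only [chernoffBound, mgf]
  rw [← ENNReal.ofReal_mul (by positivity), exp_neg]
  field_simp
  simp

theorem measure_le_chernoffBound_mul_gibbs (hα : α ≤ 0)
    (hexp : Integrable (fun x => exp (α * V x)) μ) (hS : MeasurableSet S)
    (hSR : ∀ x ∈ S, V x ≤ R) :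
    μ S ≤ ENNReal.ofReal (chernoffBound μ V α R) * gibbs μ V α S := by
  rw [measure_eq_setLIntegral_gibbs hexp hS, ← setLIntegral_const]
  exact setLIntegral_mono' hS fun x hx =>
    ENNReal.ofReal_le_ofReal (chernoffBound_le_chernoffBound hα (hSR x hx))

theorem chernoffBound_mul_gibbs_le_measure (hα : α ≤ 0)
    (hexp : Integrable (fun x => exp (α * V x)) μ) (hS : MeasurableSet S)
    (hRS : ∀ x ∈ S, R ≤ V x) :
    ENNReal.ofReal (chernoffBound μ V α R) * gibbs μ V α S ≤ μ S := by
  rw [measure_eq_setLIntegral_gibbs hexp hS, ← setLIntegral_const]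
  exact setLIntegral_mono' hS fun x hx =>
    ENNReal.ofReal_le_ofReal (chernoffBound_le_chernoffBound hα (hRS x hx))

theorem pi_gibbs (ι : Type*) [Fintype ι] [SigmaFinite μ] :
    Measure.pi (fun _ : ι => gibbs μ V α) =
      gibbs (Measure.pi fun _ : ι => μ) (fun x => ∑ i, V (x i)) α := by
  simp only [gibbs, pi_tilted, Finset.mul_sum]

theorem chernoffBound_pi (ι : Type*) [Fintype ι] [SigmaFinite μ] :
    chernoffBound (Measure.pi fun _ : ι => μ) (fun x => ∑ i, V (x i)) α (R * Fintype.card ι) =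
      chernoffBound μ V α R ^ Fintype.card ι := by
  simp only [chernoffBound, mgf, Finset.mul_sum, exp_sum]
  rw [integral_fintype_prod_eq_pow (f := fun x => exp (α * V x)), mul_pow, ← exp_nat_mul]
  ring_nf

theorem integrable_exp_sum {ι : Type*} [Fintype ι] [SigmaFinite μ]
    (hexp : Integrable (fun x => exp (α * V x)) μ) :
    Integrable (fun x : ι → X => exp (α * ∑ i, V (x i))) (Measure.pi fun _ => μ) := by
  simp only [Finset.mul_sum, exp_sum]
  exact Integrable.fintype_prod fun _ => hexp

theorem chernoffBound_le_of_integral_gibbs_eq [NeZero μ]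
    (hα : Integrable (fun x => exp (α * V x)) μ) (hβ : Integrable (fun x => exp (β * V x)) μ)
    (hint : Integrable V (gibbs μ V α)) (hR : ∫ x, V x ∂gibbs μ V α = R) :
    chernoffBound μ V α R ≤ chernoffBound μ V β R := by
  have := isProbabilityMeasure_gibbs hα
  have hpos : 0 < mgf V μ α := mgf_pos' (NeZero.ne μ) hα
  have hsum : ∀ x, exp (α * V x) * exp ((β - α) * V x) = exp (β * V x) := fun x => by
    rw [← exp_add]; ring_nf
  have hexp : Integrable (fun x => exp ((β - α) * V x)) (gibbs μ V α) := by
    simpa only [gibbs, integrable_tilted_iff hα, smul_eq_mul, hsum] using hβ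
  have hratio : ∫ x, exp ((β - α) * V x) ∂gibbs μ V α = mgf V μ β / mgf V μ α := by
    simp only [gibbs, integral_exp_tilted, Pi.add_apply, exp_add, hsum, mgf]
  have hjensen : exp ((β - α) * R) ≤ ∫ x, exp ((β - α) * V x) ∂gibbs μ V α := by
    rw [← hR, ← integral_const_mul]
    exact convexOn_exp.map_integral_le continuousOn_exp isClosed_univ (by simp)
      (hint.const_mul _) hexp
  rw [hratio, le_div_iff₀ hpos] at hjensen
  calc chernoffBound μ V α R = exp ((β - α) * R) * mgf V μ α * exp (-(β * R)) := by
        rw [chernoffBound, mul_comm (exp _), mul_assoc, ← exp_add]; ring_nf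
    _ ≤ chernoffBound μ V β R := by unfold chernoffBound; gcongr

end Gibbs

section GibbsMean

variable {X : Type*} [MeasurableSpace X] {μ : Measure X} {V : X → ℝ} {α : ℝ}

theorem integrable_gibbs_of_mem_interior (hα : α ∈ interior (integrableExpSet V μ)) :
    Integrable V (gibbs μ V α) :=
  memLp_one_iff_integrable.1 (memLp_tilted_mul hα 1)

theorem continuousOn_integral_gibbs :
    ContinuousOn (fun α => ∫ x, V x ∂gibbs μ V α) (interior (integrableExpSet V μ)) :=
  analyticOnNhd_cgf.deriv.continuousOn.congr fun _ hα => integral_tilted_mul_self hα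

theorem gibbs_gibbs (hα : Integrable (fun x => exp (α * V x)) μ) (β : ℝ) :
    gibbs (gibbs μ V α) V β = gibbs μ V (α + β) := by
  simp only [gibbs, tilted_tilted hα, Pi.add_def, add_mul]

end GibbsMean

section Laplace

/-- The point `x₀` is a well-separated minimum of `V`: a minimum at which `V` is continuous and
outside every neighbourhood of which `V` is bounded below by a constant larger than `V x₀`. The
Gibbs measures with energy `V` then concentrate at `x₀` at low temperature. -/
structure IsWellSeparatedMin {X : Type*} [TopologicalSpace X] (V : X → ℝ) (x₀ : X) : Prop where
  continuousAt : ContinuousAt V x₀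
  exists_gt_forall_notMem_le : ∀ u ∈ 𝓝 x₀, ∃ c > V x₀, ∀ x ∉ u, c ≤ V x

theorem IsWellSeparatedMin.exists_forall_le {X : Type*} [TopologicalSpace X] {V : X → ℝ} {x₀ : X}
    (hx₀ : IsWellSeparatedMin V x₀) : ∃ m, ∀ x, m ≤ V x := by
  obtain ⟨c, hc, hcV⟩ := hx₀.exists_gt_forall_notMem_le {x | V x₀ - 1 < V x}
    (hx₀.continuousAt.eventually_const_lt (by linarith))
  refine ⟨V x₀ - 1, fun x => ?_⟩
  by_contra! hx
  linarith [hcV x hx.not_gt]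

theorem neZero_of_isOpenPosMeasure {X : Type*} [TopologicalSpace X] [MeasurableSpace X]
    (μ : Measure X) [μ.IsOpenPosMeasure] (x₀ : X) : NeZero μ :=
  have : Nonempty X := ⟨x₀⟩
  ⟨ae_neBot.1 inferInstance⟩

variable {X : Type*} [MeasurableSpace X] {μ : Measure X} [IsFiniteMeasure μ] {V f : X → ℝ}

theorem integrable_exp_mul_of_nonpos (hV : AEMeasurable V μ) {m : ℝ} (hm : ∀ x, m ≤ V x) {α : ℝ}
    (hα : α ≤ 0) : Integrable (fun x => exp (α * V x)) μ :=
  .of_bound (C := exp (α * m)) (by fun_prop) <| ae_of_all _ fun x => by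
    rw [norm_of_nonneg (exp_pos _).le]
    exact exp_le_exp.2 (mul_le_mul_of_nonpos_left (hm x) hα)

theorem tendsto_exp_mul_div_mgf_atBot (hV : AEMeasurable V μ) {m : ℝ} (hm : ∀ x, m ≤ V x)
    {c d : ℝ} (hdc : d < c) (hd : μ {x | V x ≤ d} ≠ 0) :
    Tendsto (fun α => exp (α * c) / mgf V μ α) atBot (𝓝 0) := by
  have hpos : 0 < μ.real {x | V x ≤ d} := ENNReal.toReal_pos hd (measure_ne_top _ _)
  have hlim : Tendsto (fun α => exp (α * (c - d)) / μ.real {x | V x ≤ d}) atBot (𝓝 0) := by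
    simpa using (tendsto_exp_atBot.comp
      (tendsto_id.atBot_mul_const (sub_pos.2 hdc))).div_const (μ.real {x | V x ≤ d})
  refine squeeze_zero' (.of_forall fun α => div_nonneg (exp_pos _).le mgf_nonneg) ?_ hlim
  filter_upwards [eventually_le_atBot 0] with α hα
  have hchernoff := measure_le_le_exp_mul_mgf d hα (integrable_exp_mul_of_nonpos hV hm hα)
  have hmgf : 0 < mgf V μ α :=
    pos_of_mul_pos_right (hpos.trans_le hchernoff) (exp_pos _).le
  rw [div_le_div_iff₀ hmgf hpos]
  calc exp (α * c) * μ.real {x | V x ≤ d}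
      ≤ exp (α * c) * (exp (-α * d) * mgf V μ α) := by gcongr
    _ = exp (α * (c - d)) * mgf V μ α := by rw [← mul_assoc, ← exp_add]; ring_nf

theorem tendsto_integral_gibbs_atBot_of_isFiniteMeasure [TopologicalSpace X] [BorelSpace X]
    [μ.IsOpenPosMeasure] (hV : Measurable V) {x₀ : X} (hx₀ : IsWellSeparatedMin V x₀)
    (hf : Integrable f μ) (hfx₀ : ContinuousAt f x₀) :
    Tendsto (fun α => ∫ x, f x ∂gibbs μ V α) atBot (𝓝 (f x₀)) := by
  obtain ⟨m, hm⟩ := hx₀.exists_forall_le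
  have hsub : ∀ d > V x₀, μ {x | V x ≤ d} ≠ 0 := fun d hd =>
    (Measure.measure_pos_of_mem_nhds μ (hx₀.continuousAt.eventually_le_const hd)).ne'
  have := neZero_of_isOpenPosMeasure μ x₀
  simp only [gibbs, integral_tilted_mul_eq_mgf]
  refine tendsto_integral_peak_smul_of_integrable_of_tendsto
    (φ := fun α x => exp (α * V x) / mgf V μ α) .univ univ_mem (measure_ne_top _ _)
    (.of_forall fun α x => div_nonneg (exp_pos _).le mgf_nonneg) ?_ ?_
    (.of_forall fun α => by fun_prop) hf hfx₀
  · intro u hu hxu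
    obtain ⟨c, hc, hcV⟩ := hx₀.exists_gt_forall_notMem_le u (hu.mem_nhds hxu)
    obtain ⟨d, hd, hdc⟩ := exists_between hc
    have hlim := tendsto_exp_mul_div_mgf_atBot hV.aemeasurable hm hdc (hsub d hd)
    refine Metric.tendstoUniformlyOn_iff.2 fun δ hδ => ?_
    filter_upwards [hlim.eventually_lt_const hδ, eventually_le_atBot 0] with α hαδ hα x hx
    have : exp (α * V x) ≤ exp (α * c) := exp_le_exp.2 (mul_le_mul_of_nonpos_left (hcV x hx) hα)
    simp only [Pi.zero_apply, dist_zero_left]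
    rw [norm_of_nonneg (div_nonneg (exp_pos _).le mgf_nonneg)]
    exact (div_le_div_of_nonneg_right this mgf_nonneg).trans_lt hαδ
  · refine tendsto_const_nhds.congr' ?_
    filter_upwards [eventually_le_atBot 0] with α hα
    rw [Measure.restrict_univ, integral_div]
    exact (div_self (mgf_pos' (NeZero.ne μ)
      (integrable_exp_mul_of_nonpos hV.aemeasurable hm hα)).ne').symm

end Laplace

section LawOfLargeNumbers

variable {X : Type*} [MeasurableSpace X] {P : Measure X} [IsProbabilityMeasure P]

theorem ae_tendsto_average_infinitePi {f : X → ℝ} (hf : Measurable f) (hint : Integrable f P) :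
    ∀ᵐ ω ∂Measure.infinitePi fun _ : ℕ => P,
      Tendsto (fun n : ℕ => (∑ i : Fin n, f (ω i)) / n) atTop (𝓝 (∫ x, f x ∂P)) := by
  have heval : ∀ i, MeasurePreserving (fun ω : ℕ → X => ω i) (Measure.infinitePi fun _ => P) P :=
    fun i => measurePreserving_eval_infinitePi (fun _ => P) i
  have hident : ∀ i, IdentDistrib (fun ω : ℕ → X => f (ω i)) (fun ω => f (ω 0))
      (Measure.infinitePi fun _ => P) (Measure.infinitePi fun _ => P) := fun i =>
    IdentDistrib.comp ⟨(heval i).aemeasurable, (heval 0).aemeasurable,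
      (heval i).map_eq.trans (heval 0).map_eq.symm⟩ hf
  have hindep : iIndepFun (fun (i : ℕ) (ω : ℕ → X) => f (ω i)) (Measure.infinitePi fun _ => P) :=
    iIndepFun_infinitePi fun _ => hf
  have hmean : ∫ ω, f (ω 0) ∂Measure.infinitePi (fun _ : ℕ => P) = ∫ x, f x ∂P := by
    rw [← integral_map (heval 0).aemeasurable hf.aestronglyMeasurable, (heval 0).map_eq]
  have hlaw := strong_law_ae_real (fun (i : ℕ) (ω : ℕ → X) => f (ω i))
    ((heval 0).integrable_comp_of_integrable hint) (fun i j hij => hindep.indepFun hij) hident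
  simpa only [hmean, Finset.sum_range] using hlaw

theorem map_infinitePi_restrict_fin (n : ℕ) :
    (Measure.infinitePi fun _ : ℕ => P).map (fun ω (i : Fin n) => ω i) =
      Measure.pi fun _ : Fin n => P := by
  rw [← Measure.infinitePi_eq_pi]
  exact Measure.map_infinitePi_infinitePi_of_inj (P := fun _ : ℕ => P) Fin.val_injective

theorem tendsto_pi_one_of_ae_eventually_mem {E : ∀ n : ℕ, Set (Fin n → X)}
    (hE : ∀ n, MeasurableSet (E n))
    (hmem : ∀ᵐ ω ∂Measure.infinitePi fun _ : ℕ => P, ∀ᶠ n : ℕ in atTop,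
      (fun i : Fin n => ω i) ∈ E n) :
    Tendsto (fun n : ℕ => Measure.pi (fun _ : Fin n => P) (E n)) atTop (𝓝 1) := by
  have hrestrict : ∀ n, Measurable fun (ω : ℕ → X) (i : Fin n) => ω i := fun n => by fun_prop
  have hpi : ∀ n, Measure.pi (fun _ : Fin n => P) (E n) =
      Measure.infinitePi (fun _ : ℕ => P) ((fun ω (i : Fin n) => ω i) ⁻¹' E n) := fun n => by
    rw [← map_infinitePi_restrict_fin, Measure.map_apply (hrestrict n) (hE n)]
  simp only [hpi, ← measure_univ (μ := Measure.infinitePi fun _ : ℕ => P)]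
  refine tendsto_measure_of_ae_tendsto_indicator_of_isFiniteMeasure atTop .univ
    (fun n => hrestrict n (hE n)) ?_
  filter_upwards [hmem] with ω hω
  filter_upwards [hω] with n hn
  simpa using hn

end LawOfLargeNumbers

section VolumeLowerBound

variable {X : Type*} [MeasurableSpace X] {V f : X → ℝ} {μ : Measure X} [NeZero μ] {β r R c : ℝ}

theorem measurableSet_sum_le {ι : Type*} [Fintype ι] (hV : Measurable V) (c : ℝ) :
    MeasurableSet {x : ι → X | ∑ i, V (x i) ≤ c} :=
  measurableSet_le (by fun_prop) measurable_const

theorem tendsto_pi_gibbs_typical (hV : Measurable V) (hf : Measurable f)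
    (hexp : Integrable (fun x => exp (β * V x)) μ) (hVint : Integrable V (gibbs μ V β))
    (hfint : Integrable f (gibbs μ V β)) (hr : r < ∫ x, V x ∂gibbs μ V β)
    (hR : ∫ x, V x ∂gibbs μ V β < R) (hc : ∫ x, f x ∂gibbs μ V β < c) :
    Tendsto (fun n : ℕ => Measure.pi (fun _ : Fin n => gibbs μ V β)
      ({x | r * n ≤ ∑ i, V (x i)} ∩
        ({x | ∑ i, f (x i) ≤ c * n} ∩ {x | ∑ i, V (x i) ≤ R * n}))) atTop (𝓝 1) := by
  have := isProbabilityMeasure_gibbs hexp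
  refine tendsto_pi_one_of_ae_eventually_mem (fun n => ?_) ?_
  · exact (measurableSet_le (by fun_prop) (by fun_prop)).inter
      ((measurableSet_sum_le hf _).inter (measurableSet_sum_le hV _))
  filter_upwards [ae_tendsto_average_infinitePi hV hVint, ae_tendsto_average_infinitePi hf hfint]
    with ω hωV hωf
  filter_upwards [hωV.eventually_const_lt hr, hωV.eventually_lt_const hR,
    hωf.eventually_lt_const hc, eventually_gt_atTop 0] with n h₁ h₂ h₃ hn
  have hn' : (0 : ℝ) < n := Nat.cast_pos.2 hn
  rw [lt_div_iff₀ hn'] at h₁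
  rw [div_lt_iff₀ hn'] at h₂ h₃
  exact ⟨h₁.le, h₃.le, h₂.le⟩

theorem eventually_chernoffBound_pow_le_measure [SigmaFinite μ] (hV : Measurable V)
    (hf : Measurable f) (hβ : β < 0) (hexp : Integrable (fun x => exp (β * V x)) μ)
    (hVint : Integrable V (gibbs μ V β)) (hfint : Integrable f (gibbs μ V β))
    (hr : r < ∫ x, V x ∂gibbs μ V β) (hR : ∫ x, V x ∂gibbs μ V β < R)
    (hc : ∫ x, f x ∂gibbs μ V β < c) :
    ∀ᶠ n : ℕ in atTop, ENNReal.ofReal (chernoffBound μ V β r ^ n) ≤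
      Measure.pi (fun _ : Fin n => μ)
        ({x | ∑ i, f (x i) ≤ c * n} ∩ {x | ∑ i, V (x i) ≤ R * n}) := by
  obtain ⟨r', hrr', hr'⟩ := exists_between hr
  have hsmall : Tendsto (fun n : ℕ => ENNReal.ofReal (exp (β * (r' - r)) ^ n)) atTop (𝓝 0) := by
    rw [← ENNReal.ofReal_zero]
    exact ENNReal.tendsto_ofReal (tendsto_pow_atTop_nhds_zero_of_lt_one (exp_pos _).le
      (Real.exp_lt_one_iff.2 (mul_neg_of_neg_of_pos hβ (sub_pos.2 hrr'))))
  filter_upwards [hsmall.eventually_lt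
    (tendsto_pi_gibbs_typical hV hf hexp hVint hfint hr' hR hc) zero_lt_one] with n hn
  set S : Set (Fin n → X) := {x | r' * n ≤ ∑ i, V (x i)} ∩
    ({x | ∑ i, f (x i) ≤ c * n} ∩ {x | ∑ i, V (x i) ≤ R * n})
  have hS : MeasurableSet S := (measurableSet_le (by fun_prop) (by fun_prop)).inter
    ((measurableSet_sum_le hf _).inter (measurableSet_sum_le hV _))
  have hrate : chernoffBound μ V β r = chernoffBound μ V β r' * exp (β * (r' - r)) := by
    rw [← add_sub_cancel r' r, chernoffBound_add]
    ring_nf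
  calc ENNReal.ofReal (chernoffBound μ V β r ^ n)
      = ENNReal.ofReal (chernoffBound μ V β r' ^ n) * ENNReal.ofReal (exp (β * (r' - r)) ^ n) := by
        rw [hrate, mul_pow, ENNReal.ofReal_mul (pow_nonneg chernoffBound_nonneg n)]
    _ ≤ ENNReal.ofReal (chernoffBound μ V β r' ^ n) *
          Measure.pi (fun _ : Fin n => gibbs μ V β) S := by gcongr
    _ ≤ Measure.pi (fun _ : Fin n => μ) S := by
        have := chernoffBound_mul_gibbs_le_measure (R := r' * n) hβ.le
          (integrable_exp_sum (ι := Fin n) hexp) hS fun x hx => hx.1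
        have hpow := chernoffBound_pi (Fin n) (μ := μ) (V := V) (α := β) (R := r')
        rw [Fintype.card_fin] at hpow
        rwa [hpow, ← pi_gibbs] at this
    _ ≤ _ := measure_mono fun x hx => hx.2

end VolumeLowerBound

section Exchangeable

variable {X κ ν : Type*} [MeasurableSpace X]

theorem measurable_precomp (f : κ → ν) : Measurable fun x : ν → X => x ∘ f :=
  measurable_pi_lambda _ fun i => measurable_pi_apply (f i)

/-- A measure on `ν → X` is exchangeable if it is invariant under permutations of the
coordinates. -/
def IsExchangeable (U : Measure (ν → X)) : Prop :=
  ∀ e : Equiv.Perm ν, U.map (fun x => x ∘ e) = U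

theorem isExchangeable_pi [Fintype ν] (μ : Measure X) [SigmaFinite μ] :
    IsExchangeable (Measure.pi fun _ : ν => μ) := fun e =>
  (measurePreserving_arrowCongr' (fun _ : ν => μ) (fun _ => μ) e.symm (.refl X)
    fun _ => .id μ).map_eq

theorem IsExchangeable.cond {U : Measure (ν → X)} (hU : IsExchangeable U) {K : Set (ν → X)}
    (hK : MeasurableSet K) (hperm : ∀ e : Equiv.Perm ν, (fun x => x ∘ e) ⁻¹' K = K) :
    IsExchangeable (cond U K) := fun e => by
  have hrestrict : (U.restrict K).map (fun x => x ∘ e) = U.restrict K := by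
    simpa only [hperm e] using
      ((MeasurePreserving.mk (measurable_precomp e) (hU e)).restrict_preimage hK).map_eq
  rw [ProbabilityTheory.cond, Measure.map_smul, hrestrict]

theorem exists_perm_comp_eq [Finite ν] {f g : κ → ν} (hf : Function.Injective f)
    (hg : Function.Injective g) : ∃ e : Equiv.Perm ν, e ∘ g = f := by
  let e : Set.range g ≃ Set.range f := (Equiv.ofInjective g hg).symm.trans (Equiv.ofInjective f hf)
  refine ⟨e.extendSubtype, funext fun i => ?_⟩
  rw [Function.comp_apply, e.extendSubtype_apply_of_mem _ (Set.mem_range_self i)]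
  simp [e]

theorem IsExchangeable.map_comp_eq [Finite ν] {U : Measure (ν → X)} (hU : IsExchangeable U)
    {f g : κ → ν} (hf : Function.Injective f) (hg : Function.Injective g) :
    U.map (fun x => x ∘ f) = U.map (fun x => x ∘ g) := by
  obtain ⟨e, rfl⟩ := exists_perm_comp_eq hf hg
  calc U.map (fun x => x ∘ (e ∘ g)) = (U.map fun x => x ∘ e).map fun x => x ∘ g :=
        (Measure.map_map (measurable_precomp g) (measurable_precomp e)).symm
    _ = U.map fun x => x ∘ g := by rw [hU e]

end Exchangeable

section Blocks

variable {X ι κ ν : Type*} {σ : ι → κ → ν} {A : Set (κ → X)}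

theorem injective_block (hσ : Function.Injective (Function.uncurry σ)) (j : ι) :
    Function.Injective (σ j) :=
  hσ.comp (Prod.mk_right_injective j)

theorem indicator_block_mem_Icc (j : ι) (x : ν → X) :
    A.indicator (1 : (κ → X) → ℝ) (x ∘ σ j) ∈ Set.Icc 0 1 :=
  ⟨Set.indicator_nonneg (fun _ _ => zero_le_one) _,
    Set.indicator_le_self' (fun _ _ => zero_le_one) _⟩

/-- The number of blocks `x ∘ σ j` of coordinates of `x` that lie in `A`. -/
def blockCount [Fintype ι] (σ : ι → κ → ν) (A : Set (κ → X)) (x : ν → X) : ℝ :=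
  ∑ j, A.indicator 1 (x ∘ σ j)

theorem blockCount_le_card [Fintype ι] (x : ν → X) : blockCount σ A x ≤ Fintype.card ι :=
  (Finset.sum_le_card_nsmul _ _ 1 fun j _ => (indicator_block_mem_Icc j x).2).trans (by simp)

variable [MeasurableSpace X]

theorem map_pi_precomp [Fintype ν] [Fintype κ] (P : Measure X) [IsProbabilityMeasure P]
    {f : κ → ν} (hf : Function.Injective f) :
    (Measure.pi fun _ : ν => P).map (fun x => x ∘ f) = Measure.pi fun _ : κ => P := by
  rw [← Measure.infinitePi_eq_pi, ← Measure.infinitePi_eq_pi]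
  exact Measure.map_infinitePi_infinitePi_of_inj (P := fun _ : ν => P) hf

theorem iIndepFun_blocks [Finite ι] [Finite κ] [Fintype ν] (P : Measure X)
    [IsProbabilityMeasure P] (hσ : Function.Injective (Function.uncurry σ)) :
    iIndepFun (fun j (x : ν → X) => x ∘ σ j) (Measure.pi fun _ : ν => P) := by
  cases nonempty_fintype ι
  cases nonempty_fintype κ
  rw [iIndepFun_iff_map_fun_eq_pi_map fun j => (measurable_precomp (σ j)).aemeasurable]
  simp only [map_pi_precomp P (injective_block hσ _)]
  have hcurry := Measure.infinitePi_map_curry fun (_ : ι) (_ : κ) => P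
  simp only [Measure.infinitePi_eq_pi] at hcurry
  rw [← hcurry, ← map_pi_precomp P hσ,
    Measure.map_map (MeasurableEquiv.measurable _) (measurable_precomp _)]
  rfl

theorem measurable_indicator_block (hA : MeasurableSet A) (j : ι) :
    Measurable fun x : ν → X => A.indicator (1 : (κ → X) → ℝ) (x ∘ σ j) :=
  (measurable_one.indicator hA).comp (measurable_precomp _)

theorem integral_indicator_block {U : Measure (ν → X)} (hA : MeasurableSet A) (j : ι) :
    ∫ x, A.indicator (1 : (κ → X) → ℝ) (x ∘ σ j) ∂U = (U.map fun x => x ∘ σ j).real A := by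
  rw [← integral_indicator_one hA, integral_map (measurable_precomp _).aemeasurable
    (measurable_one.indicator hA).aestronglyMeasurable]

variable [Fintype ι]

theorem integrable_blockCount {U : Measure (ν → X)} [IsFiniteMeasure U] (hA : MeasurableSet A) :
    Integrable (blockCount σ A) U :=
  integrable_finsetSum _ fun j _ =>
    .of_mem_Icc 0 1 (measurable_indicator_block hA j).aemeasurable
      (ae_of_all _ (indicator_block_mem_Icc j))

theorem IsExchangeable.integral_blockCount [Finite ν] {U : Measure (ν → X)} [IsFiniteMeasure U]
    (hU : IsExchangeable U) (hσ : ∀ j, Function.Injective (σ j)) {g : κ → ν}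
    (hg : Function.Injective g) (hA : MeasurableSet A) :
    ∫ x, blockCount σ A x ∂U = Fintype.card ι * (U.map fun x => x ∘ g).real A := by
  unfold blockCount
  rw [integral_finsetSum _ fun j _ => .of_mem_Icc 0 1
    (measurable_indicator_block hA j).aemeasurable (ae_of_all _ (indicator_block_mem_Icc j))]
  simp only [integral_indicator_block hA, hU.map_comp_eq (hσ _) hg, Finset.sum_const,
    Finset.card_univ, nsmul_eq_mul]

theorem IsExchangeable.map_real_le_add [Finite ν] [Nonempty ι] {U : Measure (ν → X)}
    [IsProbabilityMeasure U] (hU : IsExchangeable U) (hσ : ∀ j, Function.Injective (σ j))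
    {g : κ → ν} (hg : Function.Injective g) (hA : MeasurableSet A) {m : ℝ} (hm : 0 ≤ m) :
    (U.map fun x => x ∘ g).real A ≤ m + U.real {x | Fintype.card ι * m ≤ blockCount σ A x} := by
  set q : ℝ := (Fintype.card ι : ℝ)
  have hq : 0 < q := Nat.cast_pos.2 Fintype.card_pos
  have hint : Integrable (blockCount σ A) U := integrable_blockCount hA
  set E := {x | q * m ≤ blockCount σ A x}
  have hE : NullMeasurableSet E U :=
    nullMeasurableSet_le aemeasurable_const hint.aemeasurable
  have hpoint : ∀ x, blockCount σ A x ≤ q * m + E.indicator (fun _ => q) x := fun x => by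
    by_cases hx : x ∈ E
    · rw [Set.indicator_of_mem hx]
      linarith [blockCount_le_card (σ := σ) (A := A) x, mul_nonneg hq.le hm]
    · rw [Set.indicator_of_notMem hx, add_zero]
      exact (not_le.1 hx).le
  have hqE : Integrable (E.indicator fun _ => q) U := (integrable_const q).indicator₀ hE
  refine le_of_mul_le_mul_left ?_ hq
  calc q * (U.map fun x => x ∘ g).real A = ∫ x, blockCount σ A x ∂U :=
        (hU.integral_blockCount hσ hg hA).symm
    _ ≤ ∫ x, (q * m + E.indicator (fun _ => q) x) ∂U :=
        integral_mono hint ((integrable_const _).add hqE) hpoint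
    _ = q * (m + U.real E) := by
        rw [integral_add (integrable_const _) hqE, integral_indicator₀ hE]
        simp only [integral_const, probReal_univ, measureReal_restrict_apply_univ, smul_eq_mul,
          one_mul]
        ring

theorem pi_real_le_blockCount_le [Fintype κ] [Fintype ν] (P : Measure X) [IsProbabilityMeasure P]
    (hσ : Function.Injective (Function.uncurry σ)) (hA : MeasurableSet A) {η : ℝ} (hη : 0 ≤ η) :
    (Measure.pi fun _ : ν => P).real {x | Fintype.card ι *
      ((Measure.pi fun _ : κ => P).real A + η) ≤ blockCount σ A x} ≤
        exp (-(2 * η ^ 2 * Fintype.card ι)) := by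
  set M := Measure.pi fun _ : ν => P
  set m := (Measure.pi fun _ : κ => P).real A
  have hmean : ∀ j, ∫ x, A.indicator (1 : (κ → X) → ℝ) (x ∘ σ j) ∂M = m := fun j => by
    rw [integral_indicator_block hA, map_pi_precomp P (injective_block hσ j)]
  have hindep : iIndepFun (fun j x => A.indicator (1 : (κ → X) → ℝ) (x ∘ σ j) - m) M :=
    (iIndepFun_blocks P hσ).comp (fun _ y => A.indicator (1 : (κ → X) → ℝ) y - m)
      fun _ => (measurable_one.indicator hA).sub_const _
  have hsub : ∀ j ∈ (Finset.univ : Finset ι), HasSubgaussianMGF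
      (fun x => A.indicator (1 : (κ → X) → ℝ) (x ∘ σ j) - m) ((‖(1 : ℝ) - 0‖₊ / 2) ^ 2) M :=
    fun j _ => by
      simpa only [hmean] using hasSubgaussianMGF_of_mem_Icc (μ := M)
        (measurable_indicator_block (σ := σ) hA j).aemeasurable
        (ae_of_all _ (indicator_block_mem_Icc j))
  have hoeffding := HasSubgaussianMGF.measure_sum_ge_le_of_iIndepFun hindep hsub
    (ε := Fintype.card ι * η) (by positivity)
  have hvar : 2 * ((∑ _j : ι, (‖(1 : ℝ) - 0‖₊ / 2) ^ 2 : NNReal) : ℝ) = Fintype.card ι / 2 := by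
    simp
    ring
  rw [hvar] at hoeffding
  convert hoeffding using 2
  · ext x
    simp only [blockCount, Set.mem_ofPred_eq, Finset.sum_sub_distrib, Finset.sum_const,
      Finset.card_univ, nsmul_eq_mul, le_sub_iff_add_le, mul_add, add_comm]
  · rcases eq_or_ne (Fintype.card ι) 0 with h | h
    · simp [h]
    · field_simp

end Blocks

section Conditioning

variable {X : Type*} [MeasurableSpace X] {μ : Measure X} [NeZero μ] {V : X → ℝ} {α R c : ℝ}

theorem measure_ne_top_of_forall_le (hα : α ≤ 0) (hexp : Integrable (fun x => exp (α * V x)) μ)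
    {K : Set X} (hK : MeasurableSet K) (hKR : ∀ x ∈ K, V x ≤ R) : μ K ≠ ∞ := by
  have := isProbabilityMeasure_gibbs hexp
  exact ne_top_of_le_ne_top (ENNReal.mul_ne_top ENNReal.ofReal_ne_top (measure_ne_top _ _))
    (measure_le_chernoffBound_mul_gibbs hα hexp hK hKR)

theorem isProbabilityMeasure_cond_of_chernoffBound_le (hα : α ≤ 0)
    (hexp : Integrable (fun x => exp (α * V x)) μ) {K : Set X} (hK : MeasurableSet K)
    (hKR : ∀ x ∈ K, V x ≤ R)
    (hlow : ENNReal.ofReal (chernoffBound μ V α R * exp (-c)) ≤ μ K) :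
    IsProbabilityMeasure (cond μ K) :=
  cond_isProbabilityMeasure_of_finite
    ((ENNReal.ofReal_pos.2 (mul_pos (chernoffBound_pos hexp) (exp_pos _))).trans_le hlow).ne'
    (measure_ne_top_of_forall_le hα hexp hK hKR)

theorem cond_real_le_exp_mul_gibbs (hα : α ≤ 0) (hexp : Integrable (fun x => exp (α * V x)) μ)
    {K E : Set X} (hK : MeasurableSet K) (hKR : ∀ x ∈ K, V x ≤ R)
    (hlow : ENNReal.ofReal (chernoffBound μ V α R * exp (-c)) ≤ μ K) (hE : MeasurableSet E) :
    (cond μ K).real E ≤ exp c * (gibbs μ V α).real E := by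
  have := isProbabilityMeasure_gibbs hexp
  have := isProbabilityMeasure_cond_of_chernoffBound_le hα hexp hK hKR hlow
  have hpos : 0 < chernoffBound μ V α R := chernoffBound_pos hexp
  have hle : ENNReal.ofReal (chernoffBound μ V α R * exp (-c)) * cond μ K E ≤
      ENNReal.ofReal (chernoffBound μ V α R) * gibbs μ V α E :=
    calc _ ≤ μ K * cond μ K E := by gcongr
      _ = μ (K ∩ E) := by
          rw [mul_comm, cond_mul_eq_inter' hK (measure_ne_top_of_forall_le hα hexp hK hKR)]
      _ ≤ ENNReal.ofReal (chernoffBound μ V α R) * gibbs μ V α (K ∩ E) :=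
          measure_le_chernoffBound_mul_gibbs hα hexp (hK.inter hE) fun x hx => hKR x hx.1
      _ ≤ _ := by gcongr; exact Set.inter_subset_right
  have hle' : chernoffBound μ V α R * exp (-c) * (cond μ K).real E ≤
      chernoffBound μ V α R * (gibbs μ V α).real E := by
    have := ENNReal.toReal_mono
      (ENNReal.mul_ne_top ENNReal.ofReal_ne_top (measure_ne_top _ _)) hle
    simpa only [measureReal_def, ENNReal.toReal_mul, ENNReal.toReal_ofReal hpos.le,
      ENNReal.toReal_ofReal (mul_pos hpos (exp_pos (-c))).le] using this
  rw [mul_assoc] at hle'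
  calc (cond μ K).real E = exp c * (exp (-c) * (cond μ K).real E) := by
        rw [← mul_assoc, ← exp_add, add_neg_cancel, exp_zero, one_mul]
    _ ≤ exp c * (gibbs μ V α).real E := by
        gcongr
        exact le_of_mul_le_mul_left hle' hpos

end Conditioning

section GibbsConditioning

variable {X : Type*} [MeasurableSpace X] {μ : Measure X} [NeZero μ] [SigmaFinite μ] {V : X → ℝ}
  {α R c η : ℝ}

instance neZero_pi {ν : Type*} [Fintype ν] : NeZero (Measure.pi fun _ : ν => μ) :=
  ⟨Measure.measure_univ_ne_zero.1 <| by
    rw [Measure.pi_univ]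
    exact Finset.prod_ne_zero_iff.2 fun _ _ => Measure.measure_univ_ne_zero.2 (NeZero.ne μ)⟩

theorem isProbabilityMeasure_cond_pi {ν : Type*} [Fintype ν] (hα : α ≤ 0)
    (hexp : Integrable (fun x => exp (α * V x)) μ) {K : Set (ν → X)} (hK : MeasurableSet K)
    (hKR : ∀ x ∈ K, ∑ i, V (x i) ≤ R * Fintype.card ν)
    (hlow : ENNReal.ofReal ((chernoffBound μ V α R * exp (-c)) ^ Fintype.card ν) ≤
      Measure.pi (fun _ => μ) K) :
    IsProbabilityMeasure (cond (Measure.pi fun _ => μ) K) := by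
  rw [mul_pow, ← chernoffBound_pi, ← exp_nat_mul, mul_neg] at hlow
  exact isProbabilityMeasure_cond_of_chernoffBound_le hα (integrable_exp_sum hexp) hK hKR hlow

theorem cond_pi_map_real_le {ι κ ν : Type*} [Fintype ι] [Nonempty ι] [Fintype κ] [Fintype ν]
    (hα : α ≤ 0) (hexp : Integrable (fun x => exp (α * V x)) μ) {K : Set (ν → X)}
    (hK : MeasurableSet K) (hperm : ∀ e : Equiv.Perm ν, (fun x => x ∘ e) ⁻¹' K = K)
    (hKR : ∀ x ∈ K, ∑ i, V (x i) ≤ R * Fintype.card ν)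
    (hlow : ENNReal.ofReal ((chernoffBound μ V α R * exp (-c)) ^ Fintype.card ν) ≤
      Measure.pi (fun _ => μ) K)
    {σ : ι → κ → ν} (hσ : Function.Injective (Function.uncurry σ)) {g : κ → ν}
    (hg : Function.Injective g) {A : Set (κ → X)} (hA : MeasurableSet A) (hη : 0 ≤ η) :
    ((cond (Measure.pi fun _ => μ) K).map fun x => x ∘ g).real A ≤
      (Measure.pi fun _ => gibbs μ V α).real A + η +
        exp (Fintype.card ν * c) * exp (-(2 * η ^ 2 * Fintype.card ι)) := by
  have := isProbabilityMeasure_gibbs hexp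
  have := isProbabilityMeasure_cond_pi hα hexp hK hKR hlow
  rw [mul_pow, ← chernoffBound_pi, ← exp_nat_mul, mul_neg] at hlow
  set m := (Measure.pi fun _ : κ => gibbs μ V α).real A
  have hmeas : MeasurableSet {x : ν → X | Fintype.card ι * (m + η) ≤ blockCount σ A x} :=
    measurableSet_le measurable_const
      (Finset.measurable_fun_sum _ fun j _ => measurable_indicator_block hA j)
  have htail := cond_real_le_exp_mul_gibbs hα (integrable_exp_sum hexp) hK hKR hlow hmeas
  rw [← pi_gibbs] at htail
  have hmarg := ((isExchangeable_pi μ).cond hK hperm).map_real_le_add (injective_block hσ) hg hA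
    (add_nonneg measureReal_nonneg hη : 0 ≤ m + η)
  have hhoeffding := mul_le_mul_of_nonneg_left
    (pi_real_le_blockCount_le (gibbs μ V α) hσ hA hη) (exp_pos (Fintype.card ν * c)).le
  linarith

theorem eventually_exp_mul_exp_div_le (k : ℕ) (hη : 0 < η) : ∃ c > 0, ∀ᶠ n : ℕ in atTop,
    exp (n * c) * exp (-(2 * η ^ 2 * (n / (k + 1) : ℕ))) ≤ η := by
  have hk : (0 : ℝ) < k + 1 := by positivity
  refine ⟨η ^ 2 / (k + 1), by positivity, ?_⟩
  have hlim : Tendsto (fun n : ℕ => exp (2 * η ^ 2 - η ^ 2 / (k + 1) * n)) atTop (𝓝 0) :=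
    tendsto_exp_atBot.comp <| tendsto_atBot_add_const_left _ _ <| tendsto_neg_atTop_atBot.comp <|
      tendsto_natCast_atTop_atTop.const_mul_atTop (by positivity)
  filter_upwards [hlim.eventually_le_const hη] with n hn
  refine le_trans ?_ hn
  have hdiv : (n : ℝ) / (k + 1) ≤ (n / (k + 1) : ℕ) + 1 := by
    rw [div_le_iff₀ hk]
    exact_mod_cast (Nat.lt_div_mul_add (a := n) (b := k + 1) k.succ_pos).le.trans_eq (by ring)
  have := mul_le_mul_of_nonneg_left hdiv (by positivity : 0 ≤ 2 * η ^ 2)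
  rw [← exp_add]
  gcongr
  ring_nf at this ⊢
  linarith

theorem levyProkhorovDist_le_of_real_le {Ω : Type*} [PseudoEMetricSpace Ω] [MeasurableSpace Ω]
    [OpensMeasurableSpace Ω] {P Q : Measure Ω} [IsProbabilityMeasure P] [IsProbabilityMeasure Q]
    (hη : 0 ≤ η) (h : ∀ A, MeasurableSet A → P.real A ≤ Q.real A + η) :
    levyProkhorovDist P Q ≤ η := by
  refine levyProkhorovDist_le_of_forall_le P Q hη fun ε A hηε hA => ?_
  calc P A = ENNReal.ofReal (P.real A) := (ofReal_measureReal).symm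
    _ ≤ ENNReal.ofReal (Q.real A + ε) := ENNReal.ofReal_le_ofReal (by linarith [h A hA])
    _ = Q A + ENNReal.ofReal ε := by
        rw [ENNReal.ofReal_add measureReal_nonneg (hη.trans hηε.le), ofReal_measureReal]
    _ ≤ Q (Metric.thickening ε A) + ENNReal.ofReal ε := by
        gcongr
        exact Metric.self_subset_thickening (hη.trans_lt hηε) A

theorem exists_levyProkhorovDist_cond_pi_le [PseudoMetricSpace X] [SecondCountableTopology X]
    [OpensMeasurableSpace X] (k : ℕ) (hα : α ≤ 0)
    (hexp : Integrable (fun x => exp (α * V x)) μ) (hη : 0 < η) :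
    ∃ c > 0, ∀ᶠ n : ℕ in atTop, ∀ (R : ℝ) (K : Set (Fin n → X)), MeasurableSet K →
      (∀ e : Equiv.Perm (Fin n), (fun x => x ∘ e) ⁻¹' K = K) →
      (∀ x ∈ K, ∑ i, V (x i) ≤ R * n) →
      ENNReal.ofReal ((chernoffBound μ V α R * exp (-c)) ^ n) ≤ Measure.pi (fun _ => μ) K →
      ∀ g : Fin k → Fin n, Function.Injective g →
        levyProkhorovDist ((cond (Measure.pi fun _ => μ) K).map fun x => x ∘ g)
          (Measure.pi fun _ => gibbs μ V α) ≤ η := by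
  have := isProbabilityMeasure_gibbs hexp
  obtain ⟨c, hc, htail⟩ := eventually_exp_mul_exp_div_le k (half_pos hη)
  refine ⟨c, hc, ?_⟩
  filter_upwards [htail, eventually_ge_atTop (k + 1)] with n hn hkn R K hK hperm hKR hlow g hg
  have hblocks : n / (k + 1) * k ≤ n :=
    (Nat.mul_le_mul_left _ k.le_succ).trans (Nat.div_mul_le_self n _)
  have : NeZero (n / (k + 1)) := ⟨(Nat.div_pos hkn k.succ_pos).ne'⟩
  have hσ : Function.Injective (Function.uncurry fun (j : Fin (n / (k + 1))) (i : Fin k) =>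
      Fin.castLE hblocks (finProdFinEquiv (j, i))) :=
    (Fin.castLE_injective hblocks).comp finProdFinEquiv.injective
  have hcard := Fintype.card_fin n
  have := isProbabilityMeasure_cond_pi hα hexp hK (by rwa [hcard]) (by rwa [hcard])
  have := Measure.isProbabilityMeasure_map (μ := cond (Measure.pi fun _ => μ) K)
    (measurable_precomp g).aemeasurable
  refine levyProkhorovDist_le_of_real_le hη.le fun A hA => ?_
  have := cond_pi_map_real_le hα hexp hK hperm (by rwa [hcard]) (by rwa [hcard]) hσ hg hA
    (half_pos hη).le
  simp only [Fintype.card_fin] at this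
  linarith

end GibbsConditioning

section MeanValue

variable {X : Type*} [MeasurableSpace X] {μ : Measure X} {V f : X → ℝ} {α β : ℝ}

theorem integrable_gibbs_of_le (hV : AEMeasurable V μ) {m : ℝ} (hm : ∀ x, m ≤ V x)
    (hexp : Integrable (fun x => exp (α * V x)) μ) (hβα : β ≤ α)
    (hf : Integrable f (gibbs μ V α)) : Integrable f (gibbs μ V β) := by
  rcases eq_or_ne μ 0 with rfl | hμ
  · simp [gibbs]
  have : NeZero μ := ⟨hμ⟩
  have := isProbabilityMeasure_gibbs hexp
  have hV' : AEMeasurable V (gibbs μ V α) := hV.mono_ac (tilted_absolutelyContinuous _ _)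
  have hexp' := integrable_exp_mul_of_nonpos hV' hm (sub_nonpos.2 hβα)
  rw [← add_sub_cancel α β, ← gibbs_gibbs hexp, gibbs, integrable_tilted_iff hexp']
  refine hf.bdd_mul (c := exp ((β - α) * m)) hexp'.1 (ae_of_all _ fun x => ?_)
  rw [norm_of_nonneg (exp_pos _).le]
  exact exp_le_exp.2 (mul_le_mul_of_nonpos_left (hm x) (sub_nonpos.2 hβα))

theorem tendsto_integral_gibbs_atBot [TopologicalSpace X] [BorelSpace X] [μ.IsOpenPosMeasure]
    (hV : Measurable V) {x₀ : X} (hx₀ : IsWellSeparatedMin V x₀)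
    (hexp : Integrable (fun x => exp (α * V x)) μ) (hf : Integrable f (gibbs μ V α))
    (hfx₀ : ContinuousAt f x₀) :
    Tendsto (fun β => ∫ x, f x ∂gibbs μ V β) atBot (𝓝 (f x₀)) := by
  have := neZero_of_isOpenPosMeasure μ x₀
  have := isProbabilityMeasure_gibbs hexp
  have : (gibbs μ V α).IsOpenPosMeasure := (absolutelyContinuous_tilted hexp).isOpenPosMeasure
  have hlim := (tendsto_integral_gibbs_atBot_of_isFiniteMeasure hV hx₀ hf hfx₀).comp
    (tendsto_atBot_add_const_right atBot (-α) tendsto_id)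
  refine hlim.congr fun β => ?_
  rw [Function.comp_apply, gibbs_gibbs hexp, id, ← sub_eq_add_neg, add_sub_cancel]

theorem exists_mem_Icc_integral_gibbs_eq (hexp : ∀ α < 0, Integrable (fun x => exp (α * V x)) μ)
    (hα : α < 0) (hβα : β ≤ α) {R : ℝ} (hβ : ∫ x, V x ∂gibbs μ V β ≤ R)
    (hR : R ≤ ∫ x, V x ∂gibbs μ V α) : ∃ γ ∈ Set.Icc β α, ∫ x, V x ∂gibbs μ V γ = R :=
  intermediate_value_Icc hβα (continuousOn_integral_gibbs.mono fun _ hγ =>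
    interior_maximal hexp isOpen_Iio (hγ.2.trans_lt hα)) ⟨hβ, hR⟩

end MeanValue

section VolumeAsymptotics

variable {X : Type*} [MeasurableSpace X] [TopologicalSpace X] [BorelSpace X] {μ : Measure X}
  [μ.IsOpenPosMeasure] {V f : X → ℝ} {x₀ : X} {α R c : ℝ}

theorem exists_le_integral_gibbs_eq (hV : Measurable V) (hx₀ : IsWellSeparatedMin V x₀)
    (hexp : ∀ α < 0, Integrable (fun x => exp (α * V x)) μ) (hα : α < 0) (hx₀R : V x₀ < R)
    (hR : R ≤ ∫ x, V x ∂gibbs μ V α) : ∃ β ≤ α, ∫ x, V x ∂gibbs μ V β = R := by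
  have hVint := integrable_gibbs_of_mem_interior (interior_maximal hexp isOpen_Iio hα)
  obtain ⟨b, hbR, hbα⟩ := ((tendsto_integral_gibbs_atBot hV hx₀ (hexp α hα) hVint
    hx₀.continuousAt).eventually_le_const hx₀R |>.and (eventually_le_atBot α)).exists
  obtain ⟨β, hβ, hβR⟩ := exists_mem_Icc_integral_gibbs_eq hexp hα hbα hbR hR
  exact ⟨β, hβ.2, hβR⟩

theorem exists_chernoffBound_mul_exp_le (hV : Measurable V) (hx₀ : IsWellSeparatedMin V x₀)
    (hexp : ∀ α < 0, Integrable (fun x => exp (α * V x)) μ) (hα : α < 0)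
    (hαR : ∫ x, V x ∂gibbs μ V α = R) (hx₀R : V x₀ < R) {κ : ℝ} (hκ : 0 < κ) :
    ∃ β ≤ α, ∃ r < ∫ x, V x ∂gibbs μ V β, ∫ x, V x ∂gibbs μ V β < R ∧
      chernoffBound μ V α R * exp (-κ) ≤ chernoffBound μ V β r := by
  have := neZero_of_isOpenPosMeasure μ x₀
  have hVint := integrable_gibbs_of_mem_interior (interior_maximal hexp isOpen_Iio hα)
  obtain ⟨b, hbR, hbα⟩ := ((tendsto_integral_gibbs_atBot hV hx₀ (hexp α hα) hVint
    hx₀.continuousAt).eventually_lt_const hx₀R |>.and (eventually_le_atBot α)).exists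
  have hb : 0 < -b := by linarith
  obtain ⟨s, hs, hsR, hsκ⟩ : ∃ s > 0, s ≤ R - ∫ x, V x ∂gibbs μ V b ∧ 2 * s * -b ≤ κ := by
    refine ⟨min (R - ∫ x, V x ∂gibbs μ V b) (κ / (2 * -b)), ?_, min_le_left _ _, ?_⟩
    · exact lt_min (sub_pos.2 hbR) (by positivity)
    · rw [mul_right_comm, ← le_div_iff₀' (by positivity)]
      exact min_le_right _ _
  obtain ⟨β, ⟨hbβ, hβα⟩, hβR⟩ :=
    exists_mem_Icc_integral_gibbs_eq (R := R - s) hexp hα hbα (by linarith) (by linarith)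
  refine ⟨β, hβα, R - 2 * s, by linarith, by linarith, ?_⟩
  have hoptimal :=
    chernoffBound_le_of_integral_gibbs_eq (hexp α hα) (hexp β (hβα.trans_lt hα)) hVint hαR
  have hsb : -κ ≤ 2 * s * β := by
    have := mul_le_mul_of_nonneg_left hbβ (by positivity : 0 ≤ 2 * s)
    linarith
  have := chernoffBound_nonneg (μ := μ) (V := V) (α := β) (R := R)
  calc chernoffBound μ V α R * exp (-κ) ≤ chernoffBound μ V β R * exp (2 * s * β) := by gcongr
    _ = chernoffBound μ V β (R - 2 * s) := by
        rw [sub_eq_add_neg R, chernoffBound_add]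
        ring_nf

theorem eventually_chernoffBound_mul_exp_pow_le_measure [SigmaFinite μ] (hV : Measurable V)
    (hf : Measurable f) (hx₀ : IsWellSeparatedMin V x₀)
    (hexp : ∀ α < 0, Integrable (fun x => exp (α * V x)) μ) (hα : α < 0)
    (hαR : ∫ x, V x ∂gibbs μ V α = R) (hx₀R : V x₀ < R)
    (hfα : Integrable f (gibbs μ V α)) (hc : ∀ β ≤ α, ∫ x, f x ∂gibbs μ V β < c) {κ : ℝ}
    (hκ : 0 < κ) :
    ∀ᶠ n : ℕ in atTop, ENNReal.ofReal ((chernoffBound μ V α R * exp (-κ)) ^ n) ≤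
      Measure.pi (fun _ : Fin n => μ)
        ({x | ∑ i, f (x i) ≤ c * n} ∩ {x | ∑ i, V (x i) ≤ R * n}) := by
  have := neZero_of_isOpenPosMeasure μ x₀
  obtain ⟨m, hm⟩ := hx₀.exists_forall_le
  obtain ⟨β, hβα, r, hr, hβR, hle⟩ :=
    exists_chernoffBound_mul_exp_le hV hx₀ hexp hα hαR hx₀R hκ
  have hβ : β < 0 := hβα.trans_lt hα
  have hnonneg := chernoffBound_nonneg (μ := μ) (V := V) (α := α) (R := R)
  filter_upwards [eventually_chernoffBound_pow_le_measure hV hf hβ (hexp β hβ)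
    (integrable_gibbs_of_mem_interior (interior_maximal hexp isOpen_Iio hβ))
    (integrable_gibbs_of_le hV.aemeasurable hm (hexp α hα) hβα hfα) hr hβR (hc β hβα)] with n hn
  exact (ENNReal.ofReal_le_ofReal (by gcongr)).trans hn

end VolumeAsymptotics

section EquivalenceOfEnsembles

theorem preimage_comp_perm_sum_le {X ν : Type*} [Fintype ν] (V : X → ℝ) (c : ℝ)
    (e : Equiv.Perm ν) :
    (fun x => x ∘ e) ⁻¹' {x : ν → X | ∑ i, V (x i) ≤ c} = {x | ∑ i, V (x i) ≤ c} := by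
  ext x
  simp only [Set.mem_preimage, Set.mem_ofPred_eq, Function.comp_apply,
    Equiv.sum_comp e fun i => V (x i)]

variable {X : Type*} [MeasurableSpace X] [PseudoMetricSpace X] [SecondCountableTopology X]
  [BorelSpace X] {μ : Measure X} [SigmaFinite μ] [μ.IsOpenPosMeasure] {V f : X → ℝ} {x₀ : X}
  {α R c δ : ℝ}

theorem exists_levyProkhorovDist_cond_pi_le_of_subset (k : ℕ) (hV : Measurable V)
    (hf : Measurable f) (hx₀ : IsWellSeparatedMin V x₀)
    (hexp : ∀ α < 0, Integrable (fun x => exp (α * V x)) μ) (hα : α < 0)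
    (hαR : ∫ x, V x ∂gibbs μ V α = R) (hx₀R : V x₀ < R)
    (hfα : Integrable f (gibbs μ V α)) (hc : ∀ β ≤ α, ∫ x, f x ∂gibbs μ V β < c) (hδ : 0 < δ) :
    ∃ ε > 0, ∀ᶠ n : ℕ in atTop, ∀ K : Set (Fin n → X), MeasurableSet K →
      (∀ e : Equiv.Perm (Fin n), (fun x => x ∘ e) ⁻¹' K = K) →
      {x | ∑ i, f (x i) ≤ c * n} ∩ {x | ∑ i, V (x i) ≤ R * n} ⊆ K →
      K ⊆ {x | ∑ i, V (x i) ≤ (R + ε) * n} →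
      ∀ g : Fin k → Fin n, Function.Injective g →
        levyProkhorovDist ((cond (Measure.pi fun _ => μ) K).map fun x => x ∘ g)
          (Measure.pi fun _ => gibbs μ V α) ≤ δ := by
  have := neZero_of_isOpenPosMeasure μ x₀
  obtain ⟨κ, hκ, hclose⟩ := exists_levyProkhorovDist_cond_pi_le k hα.le (hexp α hα) hδ
  have hα' : 0 < -α := neg_pos.2 hα
  refine ⟨κ / 2 / -α, by positivity, ?_⟩
  have hrate : chernoffBound μ V α (R + κ / 2 / -α) * exp (-κ) =
      chernoffBound μ V α R * exp (-(κ / 2)) := by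
    rw [chernoffBound_add, mul_assoc, ← exp_add, ← neg_mul, mul_div_cancel₀ _ hα'.ne']
    ring_nf
  filter_upwards [hclose, eventually_chernoffBound_mul_exp_pow_le_measure hV hf hx₀ hexp hα
    hαR hx₀R hfα hc (half_pos hκ)] with n hn hlow K hK hperm hsub hsup g hg
  refine hn _ K hK hperm hsup ?_ g hg
  rw [hrate]
  exact hlow.trans (measure_mono hsub)

theorem exists_levyProkhorovDist_cond_pi_lt (k : ℕ) (hV : Measurable V) (hf : Measurable f)
    (hx₀ : IsWellSeparatedMin V x₀) (hexp : ∀ α < 0, Integrable (fun x => exp (α * V x)) μ)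
    (hα : α < 0) (hαR : ∫ x, V x ∂gibbs μ V α = R) (hx₀R : V x₀ < R)
    (hfα : Integrable f (gibbs μ V α)) (hc : ∀ β ≤ α, ∫ x, f x ∂gibbs μ V β < c) (hδ : 0 < δ) :
    ∃ ε₀ > 0, ∀ᶠ n : ℕ in atTop, ∀ ε, 0 ≤ ε → ε ≤ ε₀ →
      ∀ g : Fin k → Fin n, Function.Injective g →
        levyProkhorovDist
          ((cond (Measure.pi fun _ => μ) ({x | ∑ i, f (x i) ≤ c * n} ∩
            {x | ∑ i, V (x i) ≤ (R + ε) * n})).map fun x => x ∘ g)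
          ((cond (Measure.pi fun _ => μ) {x | ∑ i, V (x i) ≤ R * n}).map fun x => x ∘ g) < δ := by
  have := neZero_of_isOpenPosMeasure μ x₀
  have := isProbabilityMeasure_gibbs (hexp α hα)
  obtain ⟨ε₀, hε₀, hclose⟩ := exists_levyProkhorovDist_cond_pi_le_of_subset k hV hf hx₀ hexp
    hα hαR hx₀R hfα hc (by positivity : 0 < δ / 3)
  refine ⟨ε₀, hε₀, ?_⟩
  filter_upwards [hclose] with n hn ε hε hεε₀ g hg
  have hball : ∀ {r s : ℝ}, r ≤ s →
      {x : Fin n → X | ∑ i, V (x i) ≤ r * n} ⊆ {x | ∑ i, V (x i) ≤ s * n} :=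
    fun hrs x hx => le_trans hx (mul_le_mul_of_nonneg_right hrs n.cast_nonneg)
  have h₁ := hn ({x | ∑ i, f (x i) ≤ c * n} ∩ {x | ∑ i, V (x i) ≤ (R + ε) * n})
    ((measurableSet_sum_le hf _).inter (measurableSet_sum_le hV _))
    (fun e => by rw [Set.preimage_inter, preimage_comp_perm_sum_le, preimage_comp_perm_sum_le])
    (Set.inter_subset_inter_right _ (hball (by linarith)))
    (Set.inter_subset_right.trans (hball (by linarith))) g hg
  have h₂ := hn {x | ∑ i, V (x i) ≤ R * n} (measurableSet_sum_le hV _)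
    (preimage_comp_perm_sum_le V _) Set.inter_subset_right (hball (by linarith)) g hg
  have := levyProkhorovDist_triangle
    ((cond (Measure.pi fun _ => μ) ({x | ∑ i, f (x i) ≤ c * n} ∩
      {x | ∑ i, V (x i) ≤ (R + ε) * n})).map fun x => x ∘ g)
    (Measure.pi fun _ => gibbs μ V α)
    ((cond (Measure.pi fun _ => μ) {x | ∑ i, V (x i) ≤ R * n}).map fun x => x ∘ g)
  rw [levyProkhorovDist_comm (Measure.pi fun _ => gibbs μ V α)] at this
  linarith

end EquivalenceOfEnsembles

theorem integrable_exp_mul_abs_of_neg {a : ℝ} (ha : a < 0) :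
    Integrable fun x : ℝ => exp (a * |x|) := by
  rw [← integrableOn_univ, ← Set.Iic_union_Ioi (a := 0), integrableOn_union]
  constructor
  · refine (integrableOn_exp_mul_Iic (neg_pos.2 ha) 0).congr_fun (fun x hx => ?_) measurableSet_Iic
    simp only [abs_of_nonpos (Set.mem_Iic.1 hx), mul_neg, neg_mul]
  · refine (integrableOn_exp_mul_Ioi ha 0).congr_fun (fun x hx => ?_) measurableSet_Ioi
    simp only [abs_of_pos (Set.mem_Ioi.1 hx)]

namespace IsOrlicz

variable {V : ℝ → ℝ}

theorem nonneg (hV : IsOrlicz V) (x : ℝ) : 0 ≤ V x :=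
  hV.2.2.2.2 x

theorem apply_zero (hV : IsOrlicz V) : V 0 = 0 :=
  hV.2.2.1

theorem pos (hV : IsOrlicz V) {x : ℝ} (hx : x ≠ 0) : 0 < V x :=
  hV.2.2.2.1 x hx

theorem continuous (hV : IsOrlicz V) : Continuous V :=
  continuousOn_univ.1 (hV.1.continuousOn isOpen_univ)

theorem apply_abs (hV : IsOrlicz V) (x : ℝ) : V |x| = V x := by
  rcases abs_choice x with h | h <;> rw [h]
  exact hV.2.1 x

theorem abs_mul_le (hV : IsOrlicz V) {r x : ℝ} (hr : 0 < r) (hx : r ≤ |x|) :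
    |x| * V r ≤ r * V x := by
  have hx0 : 0 < |x| := hr.trans_le hx
  have h := hV.1.2 (Set.mem_univ |x|) (Set.mem_univ 0) (div_nonneg hr.le hx0.le)
    (sub_nonneg.2 ((div_le_one hx0).2 hx)) (add_sub_cancel _ _)
  simp only [smul_eq_mul, mul_zero, add_zero, hV.apply_zero, hV.apply_abs] at h
  rwa [div_mul_cancel₀ _ hx0.ne', div_mul_eq_mul_div, le_div_iff₀ hx0, mul_comm] at h

theorem le_of_le_abs (hV : IsOrlicz V) {r x : ℝ} (hr : 0 < r) (hx : r ≤ |x|) : V r ≤ V x :=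
  le_of_mul_le_mul_left
    ((mul_le_mul_of_nonneg_right hx (hV.nonneg r)).trans (hV.abs_mul_le hr hx)) hr

theorem abs_sub_one_mul_le (hV : IsOrlicz V) (x : ℝ) : (|x| - 1) * V 1 ≤ V x := by
  rcases le_total 1 |x| with hx | hx
  · linarith [hV.abs_mul_le one_pos hx, hV.nonneg 1]
  · exact (mul_nonpos_of_nonpos_of_nonneg (sub_nonpos.2 hx) (hV.nonneg 1)).trans (hV.nonneg x)

theorem integrable_exp_mul (hV : IsOrlicz V) {α : ℝ} (hα : α < 0) :
    Integrable fun x => exp (α * V x) := by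
  have hexp : Integrable fun x : ℝ => exp (-(α * V 1)) * exp (α * V 1 * |x|) :=
    (integrable_exp_mul_abs_of_neg (mul_neg_of_neg_of_pos hα (hV.pos one_ne_zero))).const_mul _
  refine hexp.mono' (by have := hV.continuous; fun_prop) (ae_of_all _ fun x => ?_)
  rw [norm_of_nonneg (exp_pos _).le, ← exp_add]
  refine exp_le_exp.2 ?_
  linarith [mul_le_mul_of_nonpos_left (hV.abs_sub_one_mul_le x) hα.le]

theorem isWellSeparatedMin_zero (hV : IsOrlicz V) : IsWellSeparatedMin V 0 := by
  refine ⟨hV.continuous.continuousAt, fun u hu => ?_⟩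
  obtain ⟨r, hr, hru⟩ := Metric.mem_nhds_iff.1 hu
  refine ⟨V r, hV.apply_zero.trans_lt (hV.pos hr.ne'), fun x hx => hV.le_of_le_abs hr ?_⟩
  by_contra! hxr
  exact hx (hru (by simpa using hxr))

theorem integral_gibbs_pos (hV : IsOrlicz V) {α : ℝ} (hα : α < 0) :
    0 < ∫ x, V x ∂gibbs volume V α := by
  have hint : Integrable V (gibbs volume V α) := integrable_gibbs_of_mem_interior
    (interior_maximal (fun _ => hV.integrable_exp_mul) isOpen_Iio hα)
  have : (gibbs volume V α).IsOpenPosMeasure :=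
    (absolutelyContinuous_tilted (hV.integrable_exp_mul hα)).isOpenPosMeasure
  exact integral_pos_of_integrable_nonneg_nonzero hV.continuous hint hV.nonneg
    (hV.pos one_ne_zero).ne'

end IsOrlicz

theorem unifBall_eq_cond_pi (V : ℝ → ℝ) (R : ℝ) (n : ℕ) :
    unifBall V R n = cond (Measure.pi fun _ : Fin n => volume) {x | ∑ i, V (x i) ≤ R * n} :=
  rfl

theorem proj_eq_comp_castLE {k n : ℕ} (h : k ≤ n) :
    proj k n = fun x => x ∘ Fin.castLE h := by
  funext x i
  exact dif_pos (i.2.trans_le h)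

theorem cond_unifBall_orliczBall {V₁ V₂ : ℝ → ℝ} (hV₁ : IsOrlicz V₁) (hV₂ : IsOrlicz V₂)
    (R S : ℝ) (n : ℕ) :
    cond (unifBall V₁ R n) (OrliczBall V₂ S n) = cond (Measure.pi fun _ : Fin n => volume)
      ({x | ∑ i, V₁ (x i) ≤ R * n} ∩ {x | ∑ i, V₂ (x i) ≤ S * n}) := by
  have hfinite : Measure.pi (fun _ : Fin n => (volume : Measure ℝ))
      {x | ∑ i, V₁ (x i) ≤ R * n} ≠ ∞ :=
    measure_ne_top_of_forall_le neg_one_lt_zero.le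
      (integrable_exp_sum (hV₁.integrable_exp_mul neg_one_lt_zero))
      (measurableSet_sum_le hV₁.continuous.measurable _) fun _ hx => hx
  exact cond_cond_eq_cond_inter' (measurableSet_sum_le hV₁.continuous.measurable _)
    (measurableSet_sum_le hV₂.continuous.measurable _) hfinite

theorem IsOrlicz.exists_forall_integral_gibbs_lt_one {V₁ V₂ : ℝ → ℝ} (hV₁ : IsOrlicz V₁)
    (hV₂ : IsOrlicz V₂) {α : ℝ} (hα : α < 0)
    (hint : Integrable fun x => V₁ x * exp (α * V₂ x)) :
    ∃ α₀ < 0, ∀ β ≤ α₀, Integrable V₁ (gibbs volume V₂ β) ∧ ∫ x, V₁ x ∂gibbs volume V₂ β < 1 := by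
  have hexp := hV₂.integrable_exp_mul hα
  have hV₁int : Integrable V₁ (gibbs volume V₂ α) := by
    simpa only [gibbs, integrable_tilted_iff hexp, smul_eq_mul, mul_comm] using hint
  have hlim := tendsto_integral_gibbs_atBot hV₂.continuous.measurable hV₂.isWellSeparatedMin_zero
    hexp hV₁int hV₁.continuous.continuousAt
  rw [hV₁.apply_zero] at hlim
  obtain ⟨α₀, hα₀⟩ := eventually_atBot.1 (hlim.eventually_lt_const one_pos)
  exact ⟨min α₀ α, min_lt_of_right_lt hα, fun β hβ =>
    ⟨integrable_gibbs_of_le hV₂.continuous.aemeasurable hV₂.nonneg hexp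
      (hβ.trans (min_le_right _ _)) hV₁int, hα₀ β (hβ.trans (min_le_left _ _))⟩⟩

theorem stmt18_general {V₁ V₂ : ℝ → ℝ} (hV₁ : IsOrlicz V₁) (hV₂ : IsOrlicz V₂) {α : ℝ}
    (hα : α < 0) (hint : Integrable fun x => V₁ x * exp (α * V₂ x)) :
    ∃ Rb : ℝ, 0 < Rb ∧ ∀ R : ℝ, 0 < R → R ≤ Rb → ∀ k : ℕ,
      ∀ δ : ℝ, 0 < δ → ∃ ε₀ : ℝ, 0 < ε₀ ∧ ∀ ε : ℝ, 0 < ε → ε ≤ ε₀ →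
        ∃ N : ℕ, ∀ n : ℕ, N ≤ n →
          levyProkhorovDist
            (Measure.map (proj k n) (cond (unifBall V₁ 1 n) (OrliczBall V₂ (R + ε) n)))
            (Measure.map (proj k n) (unifBall V₂ R n)) < δ := by
  have hV₂meas := hV₂.continuous.measurable
  have hmin := hV₂.isWellSeparatedMin_zero
  have hexp : ∀ α < 0, Integrable fun x => exp (α * V₂ x) := fun α => hV₂.integrable_exp_mul
  obtain ⟨α₀, hα₀, hV₁α₀⟩ := hV₁.exists_forall_integral_gibbs_lt_one hV₂ hα hint
  refine ⟨∫ x, V₂ x ∂gibbs volume V₂ α₀, hV₂.integral_gibbs_pos hα₀,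
    fun R hR hRb k δ hδ => ?_⟩
  rw [← hV₂.apply_zero] at hR
  obtain ⟨β, hβα₀, hβR⟩ := exists_le_integral_gibbs_eq hV₂meas hmin hexp hα₀ hR hRb
  obtain ⟨ε₀, hε₀, hclose⟩ := exists_levyProkhorovDist_cond_pi_lt k hV₂meas
    hV₁.continuous.measurable hmin hexp (hβα₀.trans_lt hα₀) hβR hR (hV₁α₀ β hβα₀).1
    (fun γ hγ => (hV₁α₀ γ (hγ.trans hβα₀)).2) hδ
  obtain ⟨N, hN⟩ := eventually_atTop.1 hclose
  refine ⟨ε₀, hε₀, fun ε hε hεε₀ => ⟨max N k, fun n hn => ?_⟩⟩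
  rw [proj_eq_comp_castLE (le_of_max_le_right hn), cond_unifBall_orliczBall hV₁ hV₂,
    unifBall_eq_cond_pi]
  exact hN n (le_of_max_le_left hn) ε hε.le hεε₀ _ (Fin.castLE_injective _)

/-- Conditional limit theorem: there is `R̄ > 0` such that for every `0 < R ≤ R̄` and
every `k`, the law of the first `k` coordinates of a uniform random point on
`B₁^{n,V₁}` conditioned on lying in `B_{R+ε}^{n,V₂}` merges weakly (as `n → ∞`
followed by `ε → 0`, in the Lévy–Prokhorov metric) with the law of the first `k`
coordinates of a uniform random point on `B_R^{n,V₂}`. -/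
theorem stmt18 (V₁ V₂ : ℝ → ℝ) (hV₁ : IsOrlicz V₁) (hV₂ : IsOrlicz V₂)
    (hgrow : Tendsto (fun x : ℝ => V₁ x / V₂ x) (atTop ⊔ atBot) atTop)
    (hint : ∀ α : ℝ, α < 0 → Integrable (fun x : ℝ => V₁ x * Real.exp (α * V₂ x))) :
    ∃ Rb : ℝ, 0 < Rb ∧ ∀ R : ℝ, 0 < R → R ≤ Rb → ∀ k : ℕ,
      ∀ δ : ℝ, 0 < δ → ∃ ε₀ : ℝ, 0 < ε₀ ∧ ∀ ε : ℝ, 0 < ε → ε ≤ ε₀ →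
        ∃ N : ℕ, ∀ n : ℕ, N ≤ n →
          levyProkhorovDist
            (Measure.map (proj k n)
              (ProbabilityTheory.cond (unifBall V₁ 1 n) (OrliczBall V₂ (R + ε) n)))
            (Measure.map (proj k n) (unifBall V₂ R n)) < δ :=
  stmt18_general hV₁ hV₂ neg_one_lt_zero (hint (-1) neg_one_lt_zero)
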